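/- arXiv:2108.11177 — 2 statements merged into one kernel-verified Lean document; each statement's English description precedes it below -/
import Mathlib

section
/- Define the incumbent's equilibrium winning probability ι(k) = (φ − τ_m*(k))/(2φ). Then ι(k) = 1/2 for every k ∈ (0, k̄/4], ι(k) < 1/2 for every finite k > k̄/4, and lim_{k→∞} ι(k) = 1/2. In particular, the supremum of ι over (0, ∞) equals 1/2 and is attained exactly on (0, k̄/4]. -/
/-!
Since `ι(k) = 1/2 - τ_m*(k)/(2φ)`, everything reduces to the sign and the limit of `τ_m*`.
It vanishes for `k ≤ k̄/4`, where both candidates choose `φm` (`tauMstar_eq_zero`).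
For `k̄/4 < k ≤ k̄` it equals `γ((φv - φm)/2 - η)²`, and `k > k̄/4` means `η < (φv - φm)/2`.
For `k > k̄`, writing `r = (ξ/(γ²k))^(1/4)`, it equals `γη(2(φv - φm - r) + η)`, and `k > k̄` means
`r < φv - φm`. Hence `τ_m* > 0` beyond `k̄/4` (`tauMstar_pos`). As `k → ∞`, both `η` and `r` tend
to `0`, and so does `τ_m*` (`tendsto_tauMstar`).
-/

open Real Set Filter

noncomputable section

/-- Voter's threshold τ_v(q) = γ(2φ_v − q_c − q_i)(q_c − q_i). -/
def tauV (φv γ qi qc : ℝ) : ℝ := γ * (2*φv - qc - qi) * (qc - qi)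

/-- Outlet's threshold τ_m(q) = γ(2φ_m − q_c − q_i)(q_c − q_i). -/
def tauM (φm γ qi qc : ℝ) : ℝ := γ * (2*φm - qc - qi) * (qc - qi)

/-- Challenger's expected payoff from proposing q_c < q_i. -/
def VL (φm φv γ ξ k qi qc : ℝ) : ℝ :=
  min (max (tauV φv γ qi qc - (1/2) * Real.sqrt (ξ/k))
           (2 * tauV φv γ qi qc - tauM φm γ qi qc) + Real.sqrt (ξ/k))
      (tauM φm γ qi qc)

/-- Challenger's expected payoff from proposing q_c > q_i. -/
def VR (φm φv γ ξ k qi qc : ℝ) : ℝ :=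
  max (min (tauV φv γ qi qc + (1/2) * Real.sqrt (ξ/k))
           (2 * tauV φv γ qi qc - tauM φm γ qi qc) - Real.sqrt (ξ/k))
      (tauM φm γ qi qc)

/-- η(k) = √(ξ/k)/(4γ(φ_v − φ_m)). -/
def eta (φm φv γ ξ k : ℝ) : ℝ := Real.sqrt (ξ/k) / (4*γ*(φv-φm))

/-- The cost threshold k̄ = ξ/(γ²(φ_v − φ_m)⁴). -/
def kbar (φm φv γ ξ : ℝ) : ℝ := ξ / (γ^2 * (φv-φm)^4)

/-- Incumbent's equilibrium policy q_i*(k). -/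
def qistar (φm φv γ ξ k : ℝ) : ℝ :=
  if kbar φm φv γ ξ < k then φv + eta φm φv γ ξ k - (ξ/(γ^2*k)) ^ ((1:ℝ)/4)
  else if kbar φm φv γ ξ / 4 < k then (φv+φm)/2 - eta φm φv γ ξ k
  else φm

/-- Challenger's equilibrium policy q_c*(k). -/
def qcstar (φm φv γ ξ k : ℝ) : ℝ :=
  if kbar φm φv γ ξ < k then φv - (ξ/(γ^2*k)) ^ ((1:ℝ)/4) else φm

/-- Equilibrium endorsement cutoff τ_m*(k). -/
def tauMstar (φm φv γ ξ k : ℝ) : ℝ :=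
  tauM φm γ (qistar φm φv γ ξ k) (qcstar φm φv γ ξ k)

/-- The voter's equilibrium welfare W(k). -/
def W (φm φv γ ξ φ k : ℝ) : ℝ :=
  ((tauMstar φm φv γ ξ k + φ)/(2*φ)) * (-(γ * (φv - qcstar φm φv γ ξ k)^2))
  + ((φ - tauMstar φm φv γ ξ k)/(2*φ)) *
      (-(γ * (φv - qistar φm φv γ ξ k)^2) + (φ + tauMstar φm φv γ ξ k)/2)

lemma kbar_pos {φm φv γ ξ : ℝ} (hφ : φm < φv) (hγ : 0 < γ) (hξ : 0 < ξ) :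
    0 < kbar φm φv γ ξ := by
  have : 0 < φv - φm := sub_pos.2 hφ
  unfold kbar
  positivity

/-- Below a quarter of the cost threshold both candidates propose the outlet's bliss policy. -/
lemma tauMstar_eq_zero {φm φv γ ξ k : ℝ} (hφ : φm < φv) (hγ : 0 < γ) (hξ : 0 < ξ)
    (hk : k ≤ kbar φm φv γ ξ / 4) : tauMstar φm φv γ ξ k = 0 := by
  have hK := kbar_pos hφ hγ hξ
  have h1 : ¬ kbar φm φv γ ξ < k := by linarith
  have h2 : ¬ kbar φm φv γ ξ / 4 < k := by linarith
  simp [tauMstar, tauM, qistar, qcstar, h1, h2]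

/-- For high costs the incumbent stands at distance `η(k)` to the right of the challenger. -/
lemma tauMstar_of_kbar_lt {φm φv γ ξ k : ℝ} (hk : kbar φm φv γ ξ < k) :
    tauMstar φm φv γ ξ k = γ * eta φm φv γ ξ k *
      (2 * (φv - φm - (ξ/(γ^2*k)) ^ ((1:ℝ)/4)) + eta φm φv γ ξ k) := by
  simp only [tauMstar, tauM, qistar, qcstar, if_pos hk]
  ring

/-- For intermediate costs the challenger is at `φm` and the cutoff is a perfect square. -/
lemma tauMstar_of_le_kbar {φm φv γ ξ k : ℝ} (hk : k ≤ kbar φm φv γ ξ)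
    (hk' : kbar φm φv γ ξ / 4 < k) :
    tauMstar φm φv γ ξ k = γ * ((φv - φm) / 2 - eta φm φv γ ξ k) ^ 2 := by
  simp only [tauMstar, tauM, qistar, qcstar, if_neg hk.not_gt, if_pos hk']
  ring

lemma tauMstar_pos {φm φv γ ξ k : ℝ} (hφ : φm < φv) (hγ : 0 < γ) (hξ : 0 < ξ)
    (hk : kbar φm φv γ ξ / 4 < k) : 0 < tauMstar φm φv γ ξ k := by
  have hK := kbar_pos hφ hγ hξ
  have hk0 : 0 < k := by linarith
  have hd : 0 < φv - φm := sub_pos.2 hφ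
  rcases lt_or_ge (kbar φm φv γ ξ) k with h | h
  · rw [tauMstar_of_kbar_lt h]
    have he : 0 < eta φm φv γ ξ k := by unfold eta; positivity
    have hr : (ξ/(γ^2*k)) ^ ((1:ℝ)/4) < φv - φm := by
      -- `k̄ < k` says exactly that the base is below `(φv - φm) ^ 4`.
      have hb : ξ/(γ^2*k) < (φv - φm) ^ 4 := by
        unfold kbar at h
        rw [div_lt_iff₀ (by positivity)] at h ⊢
        linarith
      calc (ξ/(γ^2*k)) ^ ((1:ℝ)/4) < ((φv - φm) ^ 4) ^ ((1:ℝ)/4) :=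
            Real.rpow_lt_rpow (by positivity) hb (by norm_num)
        _ = φv - φm := by
            rw [← Real.rpow_natCast, ← Real.rpow_mul hd.le]
            norm_num
    have : 0 < φv - φm - (ξ/(γ^2*k)) ^ ((1:ℝ)/4) := sub_pos.2 hr
    positivity
  · rw [tauMstar_of_le_kbar h hk]
    have he : eta φm φv γ ξ k < (φv - φm) / 2 := by
      -- `k̄ / 4 < k` is equivalent to `√(ξ/k) < 2γ(φv - φm)²`.
      have hs : Real.sqrt (ξ/k) < 2 * γ * (φv - φm) ^ 2 := by
        rw [Real.sqrt_lt' (by positivity), div_lt_iff₀ hk0]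
        unfold kbar at hk
        rw [div_div, div_lt_iff₀ (by positivity)] at hk
        linarith
      unfold eta
      rw [div_lt_iff₀ (by positivity)]
      linarith
    have : 0 < (φv - φm) / 2 - eta φm φv γ ξ k := sub_pos.2 he
    positivity

lemma tendsto_eta (φm φv γ ξ : ℝ) :
    Tendsto (fun k => eta φm φv γ ξ k) atTop (nhds 0) := by
  have h : Tendsto (fun k : ℝ => ξ / k) atTop (nhds 0) := tendsto_id.const_div_atTop ξ
  have h2 := ((Real.continuous_sqrt.tendsto 0).comp h).div_const (4*γ*(φv-φm))
  simpa [eta, Function.comp_def] using h2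

lemma tendsto_tauMstar {φm φv γ ξ : ℝ} (hγ : 0 < γ) :
    Tendsto (fun k => tauMstar φm φv γ ξ k) atTop (nhds 0) := by
  have he := tendsto_eta φm φv γ ξ
  have hb : Tendsto (fun k : ℝ => ξ / (γ^2*k)) atTop (nhds 0) :=
    (tendsto_id.const_mul_atTop (by positivity : 0 < γ^2)).const_div_atTop ξ
  have hr := hb.rpow_const (p := (1:ℝ)/4) (Or.inr (by norm_num))
  have h := (he.const_mul γ).mul (((hr.const_sub (φv - φm)).const_mul 2).add he)
  rw [mul_zero, zero_mul] at h
  refine h.congr' ?_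
  filter_upwards [eventually_gt_atTop (kbar φm φv γ ξ)] with k hk
  exact (tauMstar_of_kbar_lt hk).symm

/-- the incumbent's equilibrium winning probability ι(k) = (φ − τ_m*(k))/(2φ)
equals 1/2 on (0, k̄/4], is < 1/2 for every finite k > k̄/4, tends to 1/2 as k → ∞, and its
supremum over (0, ∞) equals 1/2 and is attained exactly on (0, k̄/4]. -/
theorem stmt14 (φm φv γ ξ φ : ℝ) (hφ : φm < φv) (hγ : 0 < γ) (hξ : 0 < ξ) (hΦ : 0 < φ) :
    let ι : ℝ → ℝ := fun k => (φ - tauMstar φm φv γ ξ k)/(2*φ);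
    (∀ k : ℝ, 0 < k → k ≤ kbar φm φv γ ξ / 4 → ι k = 1/2) ∧
    (∀ k : ℝ, kbar φm φv γ ξ / 4 < k → ι k < 1/2) ∧
    Filter.Tendsto ι Filter.atTop (nhds (1/2)) ∧
    IsGreatest (ι '' Set.Ioi 0) (1/2) ∧
    (∀ k : ℝ, 0 < k → (ι k = 1/2 ↔ k ≤ kbar φm φv γ ξ / 4)) := by
  intro ι
  have hK := kbar_pos hφ hγ hξ
  have h1 : ∀ k : ℝ, k ≤ kbar φm φv γ ξ / 4 → ι k = 1/2 := by
    intro k hk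
    simp only [ι, tauMstar_eq_zero hφ hγ hξ hk]
    field_simp
    ring
  have h2 : ∀ k : ℝ, kbar φm φv γ ξ / 4 < k → ι k < 1/2 := by
    intro k hk
    have := tauMstar_pos hφ hγ hξ hk
    simp only [ι]
    rw [div_lt_iff₀ (by positivity)]
    linarith
  refine ⟨fun k _ hk => h1 k hk, h2, ?_, ⟨⟨kbar φm φv γ ξ / 4, ?_, h1 _ le_rfl⟩, ?_⟩, ?_⟩
  · have h := ((tendsto_tauMstar (φm := φm) (φv := φv) (ξ := ξ) hγ).const_sub φ).div_const (2*φ)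
    have e : (φ - 0) / (2*φ) = 1/2 := by field_simp; ring
    rwa [e] at h
  · exact Set.mem_Ioi.2 (by linarith)
  · rintro _ ⟨k, -, rfl⟩
    rcases le_or_gt k (kbar φm φv γ ξ / 4) with hk | hk
    · exact (h1 k hk).le
    · exact (h2 k hk).le
  · intro k _
    exact ⟨fun h => not_lt.1 fun hk => (h2 k hk).ne h, h1 k⟩

end
end

section
/- The equilibrium policy gap d(k) = q_i*(k) − q_c*(k) satisfies: d(k) = 0 for k ∈ (0, k̄/4], d(k) > 0 for every finite k > k̄/4, d is continuous and strictly increasing on [k̄/4, k̄], strictly decreasing on [k̄, ∞), and lim_{k→∞} d(k) = 0. (Hence the extent of the conflict of interest, which is proportional to d(k), is non-monotonic in the misreporting cost intensity.) -/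
/-!
Write `D = φv - φm`. The gap is `0` up to `k̄/4`, then `D/2 - η(k)` up to `k̄`, then `η(k)`
(the fourth-root terms cancel). Since `η(k̄/4) = D/2` and `η(k̄) = D/4`, neighbouring formulas
agree at the two thresholds, so they hold on the closed intervals. Everything then follows from
`η` being positive, continuous and strictly decreasing on `(0, ∞)` with limit `0` at infinity.
-/

open Real Set Filter

noncomputable section

lemma eta_strictAnti {φm φv γ ξ : ℝ} (hφ : φm < φv) (hγ : 0 < γ) (hξ : 0 < ξ) :
    StrictAntiOn (eta φm φv γ ξ) (Set.Ioi 0) := by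
  intro a ha b hb hab
  have hD : 0 < φv - φm := sub_pos.2 hφ
  have ha' : 0 < a := ha
  have hb' : 0 < b := hb
  unfold eta
  have : Real.sqrt (ξ / b) < Real.sqrt (ξ / a) :=
    Real.sqrt_lt_sqrt (by positivity) (div_lt_div_of_pos_left hξ ha' hab)
  exact div_lt_div_of_pos_right this (by positivity)

lemma eta_pos {φm φv γ ξ k : ℝ} (hφ : φm < φv) (hγ : 0 < γ) (hξ : 0 < ξ) (hk : 0 < k) :
    0 < eta φm φv γ ξ k := by
  have hD : 0 < φv - φm := sub_pos.2 hφ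
  unfold eta
  positivity

lemma eta_kbar {φm φv γ ξ : ℝ} (hφ : φm < φv) (hγ : 0 < γ) (hξ : 0 < ξ) :
    eta φm φv γ ξ (kbar φm φv γ ξ) = (φv - φm) / 4 := by
  have hD : 0 < φv - φm := sub_pos.2 hφ
  have h : ξ / kbar φm φv γ ξ = (γ * (φv - φm) ^ 2) ^ 2 := by
    unfold kbar
    field_simp
  rw [eta, h, Real.sqrt_sq (by positivity)]
  field_simp

lemma eta_kbar_div_four {φm φv γ ξ : ℝ} (hφ : φm < φv) (hγ : 0 < γ) (hξ : 0 < ξ) :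
    eta φm φv γ ξ (kbar φm φv γ ξ / 4) = (φv - φm) / 2 := by
  have hD : 0 < φv - φm := sub_pos.2 hφ
  have h : ξ / (kbar φm φv γ ξ / 4) = (2 * γ * (φv - φm) ^ 2) ^ 2 := by
    unfold kbar
    field_simp
    norm_num
  rw [eta, h, Real.sqrt_sq (by positivity)]
  field_simp
  norm_num

lemma eta_tendsto (φm φv γ ξ : ℝ) :
    Filter.Tendsto (eta φm φv γ ξ) Filter.atTop (nhds 0) := by
  have h : Filter.Tendsto (fun k : ℝ => Real.sqrt (ξ / k) / (4 * γ * (φv - φm)))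
      Filter.atTop (nhds (Real.sqrt 0 / (4 * γ * (φv - φm)))) :=
    ((Real.continuous_sqrt.tendsto 0).comp
      (tendsto_const_nhds.div_atTop Filter.tendsto_id)).div_const _
  rw [Real.sqrt_zero, zero_div] at h
  exact h

lemma eta_continuousOn (φm φv γ ξ : ℝ) :
    ContinuousOn (eta φm φv γ ξ) (Set.Ioi 0) := by
  unfold eta
  refine ContinuousOn.div_const (Real.continuous_sqrt.comp_continuousOn ?_) _
  exact continuousOn_const.div continuousOn_id fun k hk => ne_of_gt hk

/-- the equilibrium policy gap d(k) = q_i*(k) − q_c*(k) is 0 on (0, k̄/4],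
positive for every finite k > k̄/4, continuous and strictly increasing on [k̄/4, k̄],
strictly decreasing on [k̄, ∞), and tends to 0 as k → ∞. -/
theorem stmt16 (φm φv γ ξ : ℝ) (hφ : φm < φv) (hγ : 0 < γ) (hξ : 0 < ξ) :
    let d : ℝ → ℝ := fun k => qistar φm φv γ ξ k - qcstar φm φv γ ξ k;
    (∀ k : ℝ, 0 < k → k ≤ kbar φm φv γ ξ / 4 → d k = 0) ∧
    (∀ k : ℝ, kbar φm φv γ ξ / 4 < k → 0 < d k) ∧
    ContinuousOn d (Set.Icc (kbar φm φv γ ξ / 4) (kbar φm φv γ ξ)) ∧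
    StrictMonoOn d (Set.Icc (kbar φm φv γ ξ / 4) (kbar φm φv γ ξ)) ∧
    StrictAntiOn d (Set.Ici (kbar φm φv γ ξ)) ∧
    Filter.Tendsto d Filter.atTop (nhds 0) := by
  intro d
  have hK := kbar_pos hφ hγ hξ
  have hE := eta_kbar hφ hγ hξ
  have hE4 := eta_kbar_div_four hφ hγ hξ
  have hanti := eta_strictAnti hφ hγ hξ
  have hlow : ∀ k, k ≤ kbar φm φv γ ξ / 4 → d k = 0 := by
    intro k hk
    have h1 : ¬ kbar φm φv γ ξ < k := by linarith
    simp [d, qistar, qcstar, h1, not_lt.2 hk]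
  -- The next two formulas extend to the closed endpoints because adjacent pieces agree there.
  have hmid : Set.EqOn d (fun k => (φv - φm) / 2 - eta φm φv γ ξ k)
      (Set.Icc (kbar φm φv γ ξ / 4) (kbar φm φv γ ξ)) := by
    rintro k ⟨h1, h2⟩
    rcases h1.eq_or_lt with rfl | h1
    · simp [hlow _ le_rfl, hE4]
    · simp only [d, qistar, qcstar, not_lt.2 h2, h1, if_true, if_false]
      ring
  have hhigh : Set.EqOn d (eta φm φv γ ξ) (Set.Ici (kbar φm φv γ ξ)) := by
    intro k hk
    rcases (Set.mem_Ici.1 hk).eq_or_lt with rfl | hk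
    · rw [hmid ⟨by linarith, le_rfl⟩]
      simp only [hE]
      ring
    · simp only [d, qistar, qcstar, hk, if_true]
      ring
  have hsub : Set.Icc (kbar φm φv γ ξ / 4) (kbar φm φv γ ξ) ⊆ Set.Ioi 0 :=
    fun k hk => lt_of_lt_of_le (by positivity) hk.1
  have hmono : StrictMonoOn d (Set.Icc (kbar φm φv γ ξ / 4) (kbar φm φv γ ξ)) := by
    intro a ha b hb hab
    rw [hmid ha, hmid hb]
    exact sub_lt_sub_left (hanti (hsub ha) (hsub hb) hab) _
  refine ⟨fun k _ hk => hlow k hk, fun k hk => ?_, ?_, hmono, ?_, ?_⟩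
  · rcases le_total k (kbar φm φv γ ξ) with h | h
    · rw [← hlow _ le_rfl]
      exact hmono ⟨le_rfl, by linarith⟩ ⟨hk.le, h⟩ hk
    · rw [hhigh h]
      exact eta_pos hφ hγ hξ (hK.trans_le h)
  · exact (continuousOn_const.sub ((eta_continuousOn φm φv γ ξ).mono hsub)).congr hmid
  · intro a ha b hb hab
    rw [hhigh ha, hhigh hb]
    exact hanti (hK.trans_le ha) (hK.trans_le hb) hab
  · refine (eta_tendsto φm φv γ ξ).congr' ?_
    filter_upwards [Filter.eventually_ge_atTop (kbar φm φv γ ξ)] with k hk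
    exact (hhigh hk).symm

end
end
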